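/- For μ_p-almost every x ∈ pℤ_p and every real t > 0, the limit of (a_1(x)^{−t} + ⋯ + a_n(x)^{−t})/n as n → ∞ exists and equals (p−1) ∑_{k≥1} k^{−t} p^{−k}, which is finite. -/

import Mathlib

open scoped Classical

/-- The first digit `b_1(x)` of Schneider's continued fraction. -/
noncomputable def schneiderB1 (p : ℕ) [Fact p.Prime] (x : ℚ_[p]) : ℕ :=
  if h : ∃ b : ℕ, 1 ≤ b ∧ b ≤ p - 1 ∧ ‖(p : ℚ_[p]) ^ x.valuation / x - (b : ℚ_[p])‖ < 1 then
    h.choose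
  else 0

/-- Schneider's continued fraction map `T_p`. -/
noncomputable def schneiderT (p : ℕ) [Fact p.Prime] (x : ℚ_[p]) : ℚ_[p] :=
  if x = 0 then 0 else (p : ℚ_[p]) ^ x.valuation / x - (schneiderB1 p x : ℚ_[p])

/-!
Inversion preserves Haar measure on the unit sphere, because `c ^ 2` times the ball of radius `r`
around `c⁻¹` is the ball of radius `r` around `c` when `‖c‖ = 1`. On the sphere of radius
`p ^ (-k)`, Schneider's map `T` sends `p ^ k * u⁻¹` to `u - b`, where `b` is the residue of `u`.
Hence on the open unit ball, with normalized Haar measure, the pair consisting of the first digit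
of `x` and `T x` is distributed as a geometric law times the measure itself: `T` preserves the
measure, and the digits are identically distributed and pairwise independent.

The strong law of large numbers then gives, almost surely, the limit of the frequency of every
digit and of the averages of one integrable function `F` of the digits. By Scheffé's lemma these
determine the limits for all functions dominated by `F` on the same event, so the moments
`F k = |k| ^ m + 1` for natural numbers `m` handle all real exponents at once.
-/

open Filter MeasureTheory Metric ProbabilityTheory Set Topology
open scoped Pointwise ENNReal

section Averages

variable {β : Type*}

/-- Scheffé's lemma for the counting measure. -/
theorem tendsto_tsum_abs_sub_zero {ι : Type*} {l : Filter ι} {w : ι → β → ℝ} {g : β → ℝ}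
    {s : ι → ℝ} {S : ℝ} (hw_nonneg : ∀ i b, 0 ≤ w i b) (hw : ∀ i, HasSum (w i) (s i))
    (hg : HasSum g S) (hs : Tendsto s l (𝓝 S)) (hwg : ∀ b, Tendsto (w · b) l (𝓝 (g b))) :
    Tendsto (fun i ↦ ∑' b, |w i b - g b|) l (𝓝 0) := by
  have bound (i : ι) (b : β) : ‖max (g b - w i b) 0‖ ≤ |g b| := by
    rw [Real.norm_of_nonneg (le_max_right _ _)]
    exact max_le ((sub_le_self _ (hw_nonneg i b)).trans (le_abs_self _)) (abs_nonneg _)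
  have deficit_summable (i : ι) : Summable fun b ↦ max (g b - w i b) 0 :=
    .of_norm_bounded hg.summable.abs (bound i)
  have deficit_tendsto : Tendsto (fun i ↦ ∑' b, max (g b - w i b) 0) l (𝓝 0) := by
    have h := tendsto_tsum_of_dominated_convergence hg.summable.abs
      (fun b ↦ ((hwg b).const_sub (g b)).max tendsto_const_nhds) (.of_forall fun i b ↦ bound i b)
    simpa using h
  have key (i : ι) : ∑' b, |w i b - g b| = s i - S + 2 * ∑' b, max (g b - w i b) 0 := by
    refine (((hw i).sub hg).add ((deficit_summable i).hasSum.mul_left 2)).tsum_eq ▸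
      tsum_congr fun b ↦ ?_
    rcases le_total (g b) (w i b) with h | h
    · rw [abs_of_nonneg (sub_nonneg.2 h), max_eq_right (sub_nonpos.2 h)]; ring
    · rw [abs_of_nonpos (sub_nonpos.2 h), max_eq_left (sub_nonneg.2 h)]; ring
  simp_rw [key]
  simpa using (hs.sub_const S).add (deficit_tendsto.const_mul 2)

/-- The proportion of the terms `a 0, …, a (n - 1)` equal to `b`. -/
noncomputable def frequency (a : ℕ → β) (n : ℕ) (b : β) : ℝ :=
  (∑ i ∈ Finset.range n, ({b} : Set β).indicator 1 (a i)) / n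

lemma frequency_nonneg (a : ℕ → β) (n : ℕ) (b : β) : 0 ≤ frequency a n b :=
  div_nonneg (Finset.sum_nonneg fun _ _ ↦ indicator_nonneg (by simp) _) n.cast_nonneg

lemma hasSum_mul_frequency (a : ℕ → β) (n : ℕ) (f : β → ℝ) :
    HasSum (fun b ↦ f b * frequency a n b) ((∑ i ∈ Finset.range n, f (a i)) / n) := by
  have single (i : ℕ) : HasSum (fun b ↦ f b * ({b} : Set β).indicator 1 (a i)) (f (a i)) := by
    convert! hasSum_single (f := fun b ↦ f b * ({b} : Set β).indicator 1 (a i)) (a i)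
      (fun b hb ↦ ?_) using 1
    · simp
    · rw [indicator_of_notMem (mem_singleton_iff.not.2 hb.symm), mul_zero]
  convert! (hasSum_sum fun i (_ : i ∈ Finset.range n) ↦ single i).div_const (n : ℝ) using 2 with b
  rw [frequency, ← mul_div_assoc, Finset.mul_sum]

theorem tendsto_average_of_tendsto_frequency {a : ℕ → β} {F f w : β → ℝ} {S : ℝ}
    (hfreq : ∀ b, Tendsto (frequency a · b) atTop (𝓝 (w b)))
    (hFw : HasSum (fun b ↦ F b * w b) S)
    (hF : Tendsto (fun n : ℕ ↦ (∑ i ∈ Finset.range n, F (a i)) / n) atTop (𝓝 S))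
    (hf : ∀ b, |f b| ≤ F b) :
    Tendsto (fun n : ℕ ↦ (∑ i ∈ Finset.range n, f (a i)) / n) atTop (𝓝 (∑' b, f b * w b)) := by
  have hF_nonneg (b : β) : 0 ≤ F b := (abs_nonneg _).trans (hf b)
  have hw_nonneg (b : β) : 0 ≤ w b := ge_of_tendsto' (hfreq b) (frequency_nonneg a · b)
  have hfw : Summable fun b ↦ f b * w b := .of_norm_bounded hFw.summable fun b ↦ by
    rw [norm_mul, Real.norm_of_nonneg (hw_nonneg b)]
    exact mul_le_mul_of_nonneg_right (hf b) (hw_nonneg b)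
  have l1_tendsto := tendsto_tsum_abs_sub_zero
    (fun n b ↦ mul_nonneg (hF_nonneg b) (frequency_nonneg a n b))
    (fun n ↦ hasSum_mul_frequency a n F) hFw hF (fun b ↦ (hfreq b).const_mul (F b))
  refine tendsto_iff_norm_sub_tendsto_zero.2
    (squeeze_zero (fun _ ↦ norm_nonneg _) (fun n ↦ ?_) l1_tendsto)
  have l1_summable := ((hasSum_mul_frequency a n F).summable.sub hFw.summable).abs
  rw [← ((hasSum_mul_frequency a n f).sub hfw.hasSum).tsum_eq]
  refine tsum_of_norm_bounded l1_summable.hasSum fun b ↦ ?_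
  rw [← mul_sub, ← mul_sub, norm_mul, abs_mul, abs_of_nonneg (hF_nonneg b)]
  exact mul_le_mul_of_nonneg_right (hf b) (abs_nonneg _)

end Averages

section BernoulliObservable

variable {Ω β : Type*} [MeasurableSpace Ω] [MeasurableSpace β] {ν : Measure Ω}
  {X : Ω → β} {T : Ω → Ω}

lemma indepFun_comp_measurePreserving {Ω' γ : Type*} [MeasurableSpace Ω'] [MeasurableSpace γ]
    {ν' : Measure Ω'} {Y : Ω → γ} {φ : Ω' → Ω} (h : X ⟂ᵢ[ν] Y) (hX : Measurable X)
    (hY : Measurable Y) (hφ : MeasurePreserving φ ν' ν) : (X ∘ φ) ⟂ᵢ[ν'] (Y ∘ φ) := by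
  rw [indepFun_iff_measure_inter_preimage_eq_mul] at h ⊢
  intro s t hs ht
  simp only [preimage_comp, ← preimage_inter]
  rw [hφ.measure_preimage ((hX hs).inter (hY ht)).nullMeasurableSet,
    hφ.measure_preimage (hX hs).nullMeasurableSet, hφ.measure_preimage (hY ht).nullMeasurableSet,
    h s t hs ht]

theorem ae_tendsto_average_of_indepFun {Y : Ω → ℝ} (hT : MeasurePreserving T ν ν)
    (hY : Measurable Y) (hY_int : Integrable Y ν) (hYT : Y ⟂ᵢ[ν] T) :
    ∀ᵐ x ∂ν, Tendsto (fun n : ℕ ↦ (∑ i ∈ Finset.range n, Y (T^[i] x)) / n) atTop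
      (𝓝 (∫ x, Y x ∂ν)) := by
  have indep_lt {i j : ℕ} (hij : i < j) : (Y ∘ T^[i]) ⟂ᵢ[ν] (Y ∘ T^[j]) := by
    obtain ⟨n, rfl⟩ := Nat.exists_eq_add_of_lt hij
    have hYn : Measurable (Y ∘ T^[n]) := hY.comp (hT.measurable.iterate n)
    have h := indepFun_comp_measurePreserving (hYT.comp measurable_id hYn) hY
      (hYn.comp hT.measurable) (hT.iterate i)
    rwa [Function.id_comp, Function.comp_assoc, Function.comp_assoc, ← Function.iterate_succ',
      ← Function.iterate_add, show n + i.succ = i + n + 1 by omega] at h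
  refine strong_law_ae_real (fun i x ↦ Y (T^[i] x)) hY_int (fun i j hij ↦ ?_) fun i ↦ ?_
  · exact hij.lt_or_gt.elim indep_lt fun h ↦ (indep_lt h).symm
  · refine ⟨(hY.comp (hT.measurable.iterate i)).aemeasurable, hY.aemeasurable, ?_⟩
    calc ν.map (Y ∘ T^[i]) = (ν.map T^[i]).map Y :=
          (Measure.map_map hY (hT.measurable.iterate i)).symm
      _ = ν.map (Y ∘ T^[0]) := by rw [(hT.iterate i).map_eq]; rfl

variable [Countable β] [MeasurableSingletonClass β]

lemma hasSum_integral_comp {f : β → ℝ} (hX : Measurable X)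
    (hf : Integrable (fun x ↦ f (X x)) ν) :
    HasSum (fun b ↦ f b * ν.real (X ⁻¹' {b})) (∫ x, f (X x) ∂ν) := by
  have hf_meas : AEStronglyMeasurable f (ν.map X) :=
    (measurable_of_countable f).aestronglyMeasurable
  have hf_map : Integrable f (.sum fun b ↦ ν.map X {b} • .dirac b) := by
    rw [Measure.sum_smul_dirac]
    exact (integrable_map_measure hf_meas hX.aemeasurable).2 hf
  have h := hasSum_integral_measure hf_map
  simp only [Measure.sum_smul_dirac, integral_smul_measure, integral_dirac, smul_eq_mul] at h
  rw [integral_map hX.aemeasurable hf_meas] at h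
  convert! h using 2 with b
  rw [mul_comm, Measure.map_apply hX (measurableSet_singleton b), Measure.real]

theorem ae_forall_tendsto_average_of_indepFun [IsFiniteMeasure ν] {F : β → ℝ}
    (hT : MeasurePreserving T ν ν) (hX : Measurable X) (hXT : X ⟂ᵢ[ν] T)
    (hF : Integrable (fun x ↦ F (X x)) ν) :
    ∀ᵐ x ∂ν, ∀ f : β → ℝ, (∀ b, |f b| ≤ F b) →
      Tendsto (fun n : ℕ ↦ (∑ i ∈ Finset.range n, f (X (T^[i] x))) / n) atTop
        (𝓝 (∫ x, f (X x) ∂ν)) := by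
  have average_tendsto (g : β → ℝ) (hg : Integrable (fun x ↦ g (X x)) ν) :=
    ae_tendsto_average_of_indepFun hT ((measurable_of_countable g).comp hX) hg
      (hXT.comp (measurable_of_countable g) measurable_id)
  have frequency_tendsto : ∀ᵐ x ∂ν, ∀ b,
      Tendsto (frequency (fun i ↦ X (T^[i] x)) · b) atTop (𝓝 (ν.real (X ⁻¹' {b}))) := by
    refine ae_all_iff.2 fun b ↦ ?_
    have hb : MeasurableSet (X ⁻¹' {b}) := hX (measurableSet_singleton b)
    have h := average_tendsto (({b} : Set β).indicator 1) ((integrable_const 1).indicator hb)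
    rwa [← integral_indicator_one hb]
  filter_upwards [frequency_tendsto, average_tendsto F hF] with x hfreq hFx f hf
  have hf_int : Integrable (fun x ↦ f (X x)) ν :=
    hF.mono' ((measurable_of_countable f).comp hX).aestronglyMeasurable (.of_forall fun _ ↦ hf _)
  rw [← (hasSum_integral_comp hX hf_int).tsum_eq]
  exact tendsto_average_of_tendsto_frequency hfreq (hasSum_integral_comp hX hF) hFx hf

lemma measure_preimage_inter_preimage_eq_mul (hX : Measurable X) {A : Set Ω}
    (h : ∀ b, ν (X ⁻¹' {b} ∩ T ⁻¹' A) = ν (X ⁻¹' {b}) * ν A) (s : Set β) :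
    ν (X ⁻¹' s ∩ T ⁻¹' A) = ν (X ⁻¹' s) * ν A := by
  have hs : MeasurableSet s := s.to_countable.measurableSet
  have map_eq : (ν.restrict (T ⁻¹' A)).map X = ν A • ν.map X := Measure.ext_of_singleton fun b ↦ by
    have hb := measurableSet_singleton b
    rw [Measure.smul_apply, Measure.map_apply hX hb, Measure.map_apply hX hb,
      Measure.restrict_apply (hX hb), h b, smul_eq_mul, mul_comm]
  rw [← Measure.restrict_apply (hX hs), ← Measure.map_apply hX hs, map_eq, Measure.smul_apply,
    Measure.map_apply hX hs, smul_eq_mul, mul_comm]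

theorem measurePreserving_of_measure_inter_eq_mul [IsProbabilityMeasure ν] (hX : Measurable X)
    (hT : Measurable T)
    (h : ∀ b A, MeasurableSet A → ν (X ⁻¹' {b} ∩ T ⁻¹' A) = ν (X ⁻¹' {b}) * ν A) :
    MeasurePreserving T ν ν := by
  refine ⟨hT, Measure.ext fun A hA ↦ ?_⟩
  simpa [Measure.map_apply hT hA] using
    measure_preimage_inter_preimage_eq_mul hX (h · A hA) univ

theorem indepFun_of_measure_inter_eq_mul (hT : MeasurePreserving T ν ν) (hX : Measurable X)
    (h : ∀ b A, MeasurableSet A → ν (X ⁻¹' {b} ∩ T ⁻¹' A) = ν (X ⁻¹' {b}) * ν A) :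
    X ⟂ᵢ[ν] T := by
  refine indepFun_iff_measure_inter_preimage_eq_mul.2 fun s A _ hA ↦ ?_
  rw [measure_preimage_inter_preimage_eq_mul hX (h · A hA),
    hT.measure_preimage hA.nullMeasurableSet]

end BernoulliObservable
section Ultrametric

variable {X : Type*} [PseudoMetricSpace X]

lemma isPiSystem_balls [IsUltrametricDist X] :
    IsPiSystem (range fun c : X × ℝ ↦ ball c.1 c.2) := by
  rintro _ ⟨⟨x, r⟩, rfl⟩ _ ⟨⟨y, s⟩, rfl⟩ hne
  rcases IsUltrametricDist.ball_subset_trichotomy x y r s with h | h | h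
  · exact ⟨(x, r), (inter_eq_left.2 h).symm⟩
  · exact ⟨(y, s), (inter_eq_right.2 h).symm⟩
  · exact absurd hne (not_nonempty_iff_eq_empty.2 h.inter_eq)

lemma measurableSpace_eq_generateFrom_balls [SecondCountableTopology X] [mX : MeasurableSpace X]
    [BorelSpace X] :
    mX = MeasurableSpace.generateFrom (range fun c : X × ℝ ↦ ball c.1 c.2) := by
  have balls_basis : TopologicalSpace.IsTopologicalBasis (range fun c : X × ℝ ↦ ball c.1 c.2) := by
    refine TopologicalSpace.isTopologicalBasis_of_isOpen_of_nhds ?_ fun x u hx hu ↦ ?_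
    · rintro _ ⟨c, rfl⟩
      exact isOpen_ball
    · obtain ⟨ε, hε, hεu⟩ := isOpen_iff.1 hu x hx
      exact ⟨_, ⟨(x, ε), rfl⟩, mem_ball_self hε, hεu⟩
  rw [← balls_basis.borel_eq_generateFrom]
  exact BorelSpace.measurable_eq

theorem measure_ext_of_ball [IsUltrametricDist X] [SecondCountableTopology X] [MeasurableSpace X]
    [BorelSpace X] {μ ν : Measure X} [IsFiniteMeasure μ]
    (h : ∀ x r, μ (ball x r) = ν (ball x r)) : μ = ν := by
  rcases isEmpty_or_nonempty X with _ | ⟨⟨x⟩⟩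
  · exact Subsingleton.elim μ ν
  · refine Measure.ext_of_generateFrom_of_iUnion _ (fun n : ℕ ↦ ball x n)
      measurableSpace_eq_generateFrom_balls isPiSystem_balls (iUnion_ball_nat x)
      (fun n ↦ ⟨(x, n), rfl⟩) (fun n ↦ measure_ne_top μ _) ?_
    rintro _ ⟨⟨y, r⟩, rfl⟩
    exact h y r

end Ultrametric

section NormedField

variable {K : Type*} [NormedField K]

lemma sphere_inter_preimage_inv_ball_of_norm_eq_one {c : K} (hc : ‖c‖ = 1) (r : ℝ) :
    sphere 0 1 ∩ (·⁻¹) ⁻¹' ball c r = sphere 0 1 ∩ ball c⁻¹ r := by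
  ext x
  refine and_congr_right fun hx ↦ ?_
  have hx : ‖x‖ = 1 := mem_sphere_zero_iff_norm.1 hx
  have hx0 : x ≠ 0 := norm_ne_zero_iff.1 (hx ▸ one_ne_zero)
  have hc0 : c⁻¹ ≠ 0 := inv_ne_zero (norm_ne_zero_iff.1 (hc ▸ one_ne_zero))
  rw [mem_preimage, mem_ball, mem_ball, ← inv_inv c, dist_inv_inv₀ hx0 hc0, inv_inv, norm_inv, hx,
    hc, inv_one, mul_one, div_one]

lemma sphere_inter_preimage_inv_ball_of_norm_ne_one [IsUltrametricDist K] {c : K}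
    (hc : ‖c‖ ≠ 1) (r : ℝ) :
    sphere 0 1 ∩ (·⁻¹) ⁻¹' ball c r = sphere 0 1 ∩ ball c r := by
  have norm_sub_eq {y : K} (hy : ‖y‖ = 1) : ‖y - c‖ = max 1 ‖c‖ := by
    rw [sub_eq_add_neg, IsUltrametricDist.norm_add_eq_max_of_norm_ne_norm
      (by rw [hy, norm_neg]; exact hc.symm), hy, norm_neg]
  ext x
  refine and_congr_right fun hx ↦ ?_
  have hx : ‖x‖ = 1 := mem_sphere_zero_iff_norm.1 hx
  rw [mem_preimage, mem_ball_iff_norm, mem_ball_iff_norm, norm_sub_eq hx,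
    norm_sub_eq (by rw [norm_inv, hx, inv_one])]

lemma distribHaarChar_eq_one_of_norm_eq_one [ProperSpace K] {c : Kˣ} (hc : ‖(c : K)‖ = 1) :
    distribHaarChar K c = 1 := by
  borelize K
  have smul_ball_zero : c • ball (0 : K) 1 = ball 0 1 :=
    (_root_.smul_ball c.ne_zero 0 1).trans (by rw [smul_zero, hc, one_mul])
  exact distribHaarChar_eq_of_measure_smul_eq_mul (μ := Measure.addHaar)
    (measure_ball_pos _ 0 one_pos).ne' measure_ball_lt_top.ne
    (by rw [smul_ball_zero, ENNReal.coe_one, one_mul])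

variable [ProperSpace K] [MeasurableSpace K] [BorelSpace K] {μ : Measure K} [μ.IsAddHaarMeasure]

lemma addHaar_smul_of_norm_eq_one {c : K} (hc : ‖c‖ = 1) (s : Set K) : μ (c • s) = μ s := by
  have hc0 : c ≠ 0 := norm_ne_zero_iff.1 (hc ▸ one_ne_zero)
  have char_eq_one := distribHaarChar_eq_one_of_norm_eq_one (c := Units.mk0 c hc0) hc
  simpa [char_eq_one] using (distribHaarChar_mul μ (Units.mk0 c hc0) s).symm

theorem measurePreserving_inv_restrict_sphere [IsUltrametricDist K] :
    MeasurePreserving (·⁻¹) (μ.restrict (sphere (0 : K) 1)) (μ.restrict (sphere 0 1)) := by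
  have : IsFiniteMeasure (μ.restrict (sphere (0 : K) 1)) :=
    isFiniteMeasure_restrict.2 (isCompact_sphere 0 1).measure_ne_top
  refine ⟨measurable_inv, (measure_ext_of_ball fun c r ↦ ?_).symm⟩
  rw [Measure.map_apply measurable_inv measurableSet_ball,
    Measure.restrict_apply measurableSet_ball,
    Measure.restrict_apply (measurable_inv measurableSet_ball), inter_comm, inter_comm (_ ⁻¹' _)]
  by_cases hc : ‖c‖ = 1
  · have hc0 : c ≠ 0 := norm_ne_zero_iff.1 (hc ▸ one_ne_zero)
    have hcc : ‖c * c‖ = 1 := by rw [norm_mul, hc, one_mul]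
    -- Multiplication by `c ^ 2` carries the ball around `c⁻¹` to the ball around `c`.
    rw [sphere_inter_preimage_inv_ball_of_norm_eq_one hc,
      ← addHaar_smul_of_norm_eq_one hcc (_ ∩ ball c⁻¹ r), smul_set_inter₀ (mul_ne_zero hc0 hc0),
      smul_sphere' (mul_ne_zero hc0 hc0), _root_.smul_ball (mul_ne_zero hc0 hc0), hcc, smul_zero,
      one_mul, one_mul, smul_eq_mul, mul_inv_cancel_right₀ hc0]
  · rw [sphere_inter_preimage_inv_ball_of_norm_ne_one hc]

end NormedField

section Padic

variable {p : ℕ} [hp : Fact p.Prime]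

lemma pairwiseDisjoint_ball_natCast :
    (Finset.range p : Set ℕ).PairwiseDisjoint fun b ↦ ball (b : ℚ_[p]) 1 := by
  intro b hb c hc hbc
  refine disjoint_left.2 fun x hxb hxc ↦ hbc ?_
  have norm_lt : ‖((c - b : ℤ) : ℚ_[p])‖ < 1 := by
    have hcb : dist (c : ℚ_[p]) b < 1 :=
      (dist_triangle_max _ x _).trans_lt (max_lt (mem_ball'.1 hxc) hxb)
    simpa [dist_eq_norm] using hcb
  exact (Nat.modEq_iff_dvd.2 (Padic.norm_intCast_lt_one_iff.1 norm_lt)).eq_of_lt_of_lt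
    (Finset.mem_range.1 hb) (Finset.mem_range.1 hc)

lemma closedBall_eq_biUnion_ball :
    closedBall (0 : ℚ_[p]) 1 = ⋃ b ∈ Finset.range p, ball (b : ℚ_[p]) 1 := by
  ext x
  simp only [mem_iUnion₂, Finset.mem_range, exists_prop]
  refine ⟨fun hx ↦ ?_, fun ⟨b, _, hxb⟩ ↦ ?_⟩
  · obtain ⟨b, hb, hxb⟩ := PadicInt.exists_mem_range (p := p) ⟨x, mem_closedBall_zero_iff.1 hx⟩
    refine ⟨b, hb, mem_ball_iff_norm.2 ?_⟩
    rwa [IsLocalRing.mem_maximalIdeal, PadicInt.mem_nonunits, PadicInt.norm_def] at hxb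
  · rw [mem_closedBall, ← max_self (1 : ℝ)]
    exact (dist_triangle_max x b 0).trans (max_le_max (mem_ball.1 hxb).le
      (by simpa using Padic.norm_int_le_one b))

lemma sphere_eq_biUnion_ball :
    sphere (0 : ℚ_[p]) 1 = ⋃ b ∈ Finset.Ico 1 p, ball (b : ℚ_[p]) 1 := by
  rw [← closedBall_sdiff_ball, closedBall_eq_biUnion_ball]
  ext x
  simp only [Set.mem_sdiff, mem_iUnion₂, exists_prop]
  refine ⟨fun ⟨⟨b, hb, hxb⟩, hx0⟩ ↦ ⟨b, ?_, hxb⟩, fun ⟨b, hb, hxb⟩ ↦ ?_⟩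
  · have hb0 : b ≠ 0 := by
      rintro rfl
      exact hx0 (by rwa [Nat.cast_zero] at hxb)
    exact Finset.mem_Ico.2 ⟨Nat.one_le_iff_ne_zero.2 hb0, Finset.mem_range.1 hb⟩
  · obtain ⟨hb1, hbp⟩ := Finset.mem_Ico.1 hb
    have disj := pairwiseDisjoint_ball_natCast (Finset.mem_coe.2 (Finset.mem_range.2 hbp))
      (Finset.mem_coe.2 (Finset.mem_range.2 hp.out.pos)) (Nat.one_le_iff_ne_zero.1 hb1)
    exact ⟨⟨b, Finset.mem_range.2 hbp, hxb⟩, by simpa using disjoint_left.1 disj hxb⟩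

lemma p_smul_closedBall : (p : ℚ_[p]) • closedBall (0 : ℚ_[p]) 1 = ball 0 1 := by
  have hp0 : (p : ℚ_[p]) ≠ 0 := Nat.cast_ne_zero.2 hp.out.ne_zero
  ext x
  rw [smul_closedBall' hp0, smul_zero, mul_one, mem_closedBall_zero_iff, mem_ball_zero_iff,
    Padic.norm_p, ← zpow_neg_one]
  simpa using (Padic.norm_le_pow_iff_norm_lt_pow_add_one x (-1))

lemma enorm_padic_p : ‖(p : ℚ_[p])‖ₑ = (p : ℝ≥0∞)⁻¹ := by
  rw [← ofReal_norm, Padic.norm_p, ENNReal.ofReal_inv_of_pos (mod_cast hp.out.pos),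
    ENNReal.ofReal_natCast]

lemma addHaar_closedBall_eq_mul_addHaar_ball [MeasurableSpace ℚ_[p]] [BorelSpace ℚ_[p]]
    (μ : Measure ℚ_[p]) [μ.IsAddHaarMeasure] :
    μ (closedBall (0 : ℚ_[p]) 1) = p * μ (ball 0 1) := by
  rw [closedBall_eq_biUnion_ball, measure_biUnion_finset pairwiseDisjoint_ball_natCast
    fun _ _ ↦ measurableSet_ball]
  simp [Measure.addHaar_ball_center]

lemma distribHaarChar_padic_p (hp0 : (p : ℚ_[p]) ≠ 0) :
    distribHaarChar ℚ_[p] (Units.mk0 (p : ℚ_[p]) hp0) = ‖(p : ℚ_[p])‖₊ := by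
  borelize ℚ_[p]
  have measure_smul_closedBall :
      Measure.addHaar (Units.mk0 (p : ℚ_[p]) hp0 • closedBall (0 : ℚ_[p]) 1) =
        ‖(p : ℚ_[p])‖₊ * Measure.addHaar (closedBall (0 : ℚ_[p]) 1) := by
    rw [addHaar_closedBall_eq_mul_addHaar_ball, ← mul_assoc, ← enorm_eq_nnnorm, enorm_padic_p,
      ENNReal.inv_mul_cancel (Nat.cast_ne_zero.2 hp.out.ne_zero) (ENNReal.natCast_ne_top p),
      one_mul, ← p_smul_closedBall]
    rfl
  exact distribHaarChar_eq_of_measure_smul_eq_mul (measure_closedBall_pos _ 0 one_pos).ne'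
    measure_closedBall_lt_top.ne measure_smul_closedBall

theorem distribHaarChar_padic (c : ℚ_[p]ˣ) : distribHaarChar ℚ_[p] c = ‖(c : ℚ_[p])‖₊ := by
  have hp0 : (p : ℚ_[p]) ≠ 0 := Nat.cast_ne_zero.2 hp.out.ne_zero
  obtain ⟨k, hk⟩ : ∃ k : ℤ, ‖(c : ℚ_[p])‖ = ‖(p : ℚ_[p]) ^ k‖ :=
    ⟨_, by rw [Padic.norm_p_zpow, Padic.norm_eq_zpow_neg_valuation c.ne_zero]⟩
  set π : ℚ_[p]ˣ := Units.mk0 (p : ℚ_[p]) hp0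
  have norm_unit_part : ‖((c / π ^ k : ℚ_[p]ˣ) : ℚ_[p])‖ = 1 := by
    rw [Units.val_div_eq_div_val, Units.val_zpow_eq_zpow_val, norm_div, hk]
    exact div_self (norm_ne_zero_iff.2 (zpow_ne_zero k hp0))
  have nnnorm_eq : ‖(c : ℚ_[p])‖₊ = ‖(p : ℚ_[p])‖₊ ^ k := by
    rw [← nnnorm_zpow]
    exact NNReal.eq hk
  rw [← div_mul_cancel c (π ^ k), map_mul, distribHaarChar_eq_one_of_norm_eq_one norm_unit_part,
    one_mul, map_zpow, distribHaarChar_padic_p, div_mul_cancel, nnnorm_eq]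

lemma addHaar_padic_smul [MeasurableSpace ℚ_[p]] [BorelSpace ℚ_[p]] (μ : Measure ℚ_[p])
    [μ.IsAddHaarMeasure] {c : ℚ_[p]} (hc : c ≠ 0) (s : Set ℚ_[p]) : μ (c • s) = ‖c‖ₑ * μ s := by
  have h := distribHaarChar_mul μ (Units.mk0 c hc) s
  rw [distribHaarChar_padic] at h
  exact h.symm

end Padic

section Schneider

variable {p : ℕ} [hp : Fact p.Prime]

lemma padic_valuation_eq_of_norm_eq {x y : ℚ_[p]} (h : ‖x‖ = ‖y‖) :
    x.valuation = y.valuation := by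
  have hp1 : (1 : ℝ) < p := mod_cast hp.out.one_lt
  rcases eq_or_ne y 0 with rfl | hy
  · rw [norm_zero, norm_eq_zero] at h
    rw [h]
  · have hx : x ≠ 0 := norm_ne_zero_iff.1 (h ▸ norm_ne_zero_iff.2 hy)
    rwa [Padic.norm_eq_zpow_neg_valuation hx, Padic.norm_eq_zpow_neg_valuation hy,
      zpow_right_inj₀ (zero_lt_one.trans hp1) hp1.ne', neg_inj] at h

lemma eventually_padic_valuation_eq {x : ℚ_[p]} (hx : x ≠ 0) :
    ∀ᶠ y in 𝓝 x, y.valuation = x.valuation := by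
  have sphere_mem : sphere 0 ‖x‖ ∈ 𝓝 x :=
    (IsUltrametricDist.isOpen_sphere 0 (norm_ne_zero_iff.2 hx)).mem_nhds
      (mem_sphere_zero_iff_norm.2 rfl)
  filter_upwards [sphere_mem] with y hy
  exact padic_valuation_eq_of_norm_eq (mem_sphere_zero_iff_norm.1 hy)

lemma padic_valuation_preimage_singleton {k : ℤ} (hk : k ≠ 0) :
    Padic.valuation ⁻¹' {k} = sphere (0 : ℚ_[p]) ((p : ℝ) ^ (-k)) := by
  have hp1 : (1 : ℝ) < p := mod_cast hp.out.one_lt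
  ext x
  rw [mem_preimage, mem_singleton_iff, mem_sphere_zero_iff_norm]
  rcases eq_or_ne x 0 with rfl | hx
  · rw [Padic.valuation_zero, norm_zero]
    exact iff_of_false hk.symm (zpow_pos (zero_lt_one.trans hp1) (-k)).ne
  · rw [Padic.norm_eq_zpow_neg_valuation hx, zpow_right_inj₀ (zero_lt_one.trans hp1) hp1.ne',
      neg_inj]

lemma one_le_padic_valuation {x : ℚ_[p]} (hx : x ≠ 0) (hx1 : ‖x‖ < 1) : 1 ≤ x.valuation := by
  rw [Padic.norm_eq_zpow_neg_valuation hx,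
    zpow_lt_one_iff_right₀ (mod_cast hp.out.one_lt : (1 : ℝ) < p)] at hx1
  lia

lemma zpow_valuation_div_self_mem_sphere {x : ℚ_[p]} (hx : x ≠ 0) :
    (p : ℚ_[p]) ^ x.valuation / x ∈ sphere 0 1 := by
  rw [mem_sphere_zero_iff_norm, norm_div, Padic.norm_p_zpow,
    ← Padic.norm_eq_zpow_neg_valuation hx, div_self (norm_ne_zero_iff.2 hx)]

lemma schneiderB1_spec {x : ℚ_[p]} (hx : x ≠ 0) :
    schneiderB1 p x ∈ Finset.Ico 1 p ∧
      (p : ℚ_[p]) ^ x.valuation / x ∈ ball (schneiderB1 p x : ℚ_[p]) 1 := by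
  have digit_exists : ∃ b : ℕ, 1 ≤ b ∧ b ≤ p - 1 ∧
      ‖(p : ℚ_[p]) ^ x.valuation / x - (b : ℚ_[p])‖ < 1 := by
    have h := zpow_valuation_div_self_mem_sphere hx
    rw [sphere_eq_biUnion_ball] at h
    obtain ⟨b, hb, hxb⟩ := mem_iUnion₂.1 h
    obtain ⟨hb1, hbp⟩ := Finset.mem_Ico.1 hb
    exact ⟨b, hb1, Nat.le_sub_one_of_lt hbp, mem_ball_iff_norm.1 hxb⟩
  obtain ⟨hb1, hbp, hxb⟩ := digit_exists.choose_spec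
  rw [schneiderB1, dif_pos digit_exists]
  exact ⟨Finset.mem_Ico.2 ⟨hb1, by have := hp.out.pos; lia⟩, mem_ball_iff_norm.2 hxb⟩

lemma schneiderT_eq_sub_of_mem_ball {x : ℚ_[p]} {b : ℕ} (hx : x ≠ 0) (hb : b < p)
    (hxb : (p : ℚ_[p]) ^ x.valuation / x ∈ ball (b : ℚ_[p]) 1) :
    schneiderT p x = (p : ℚ_[p]) ^ x.valuation / x - b := by
  obtain ⟨hd, hxd⟩ := schneiderB1_spec hx
  have digit_eq : schneiderB1 p x = b :=
    pairwiseDisjoint_ball_natCast.elim_set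
      (Finset.mem_coe.2 (Finset.mem_range.2 (Finset.mem_Ico.1 hd).2))
      (Finset.mem_coe.2 (Finset.mem_range.2 hb)) _ hxd hxb
  rw [schneiderT, if_neg hx, digit_eq]

lemma schneiderT_zpow_mul_inv {u : ℚ_[p]} {b : ℕ} (hb : b ∈ Finset.Ico 1 p)
    (hu : u ∈ ball (b : ℚ_[p]) 1) (k : ℤ) : schneiderT p ((p : ℚ_[p]) ^ k * u⁻¹) = u - b := by
  have hp0 : (p : ℚ_[p]) ≠ 0 := Nat.cast_ne_zero.2 hp.out.ne_zero
  have norm_u : ‖u‖ = 1 := by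
    rw [← mem_sphere_zero_iff_norm, sphere_eq_biUnion_ball]
    exact mem_biUnion hb hu
  have hu0 : u ≠ 0 := norm_ne_zero_iff.1 (norm_u ▸ one_ne_zero)
  have hu_val : u⁻¹.valuation = 0 := by
    rw [padic_valuation_eq_of_norm_eq (y := 1) (by rw [norm_inv, norm_u, inv_one, norm_one]),
      Padic.valuation_one]
  have quotient_eq : (p : ℚ_[p]) ^ ((p : ℚ_[p]) ^ k * u⁻¹).valuation / (p ^ k * u⁻¹) = u := by
    rw [Padic.valuation_mul (zpow_ne_zero k hp0) (inv_ne_zero hu0), Padic.valuation_zpow,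
      Padic.valuation_p, hu_val]
    field_simp
    simp
  rw [schneiderT_eq_sub_of_mem_ball (mul_ne_zero (zpow_ne_zero k hp0) (inv_ne_zero hu0))
    (Finset.mem_Ico.1 hb).2 (quotient_eq.symm ▸ hu), quotient_eq]

lemma continuousAt_schneiderT {x : ℚ_[p]} (hx : x ≠ 0) : ContinuousAt (schneiderT p) x := by
  obtain ⟨hb, hxb⟩ := schneiderB1_spec hx
  have quotient_continuousAt : ContinuousAt (fun y ↦ (p : ℚ_[p]) ^ x.valuation / y) x :=
    continuousAt_const.div continuousAt_id hx
  refine (quotient_continuousAt.sub (continuousAt_const (y := (schneiderB1 p x : ℚ_[p])))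
    ).congr_of_eventuallyEq ?_
  filter_upwards [eventually_padic_valuation_eq hx, eventually_ne_nhds hx,
    quotient_continuousAt.eventually_mem (isOpen_ball.mem_nhds hxb)] with y hy hy0 hyb
  rw [← hy] at hyb ⊢
  exact schneiderT_eq_sub_of_mem_ball hy0 (Finset.mem_Ico.1 hb).2 hyb

variable [MeasurableSpace ℚ_[p]] [BorelSpace ℚ_[p]]

lemma measurable_padic_valuation : Measurable (Padic.valuation : ℚ_[p] → ℤ) :=
  measurable_of_continuousOn_compl_singleton 0 fun _ hx ↦
    (continuousAt_const.congr_of_eventuallyEq (eventually_padic_valuation_eq hx)).continuousWithinAt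

lemma measurable_schneiderT : Measurable (schneiderT p) :=
  measurable_of_continuousOn_compl_singleton 0 fun _ hx ↦
    (continuousAt_schneiderT hx).continuousWithinAt

variable (μ : Measure ℚ_[p]) [μ.IsAddHaarMeasure]

lemma measure_sphere_inter_preimage_schneiderT_inv (k : ℤ) {A : Set ℚ_[p]} (hA : MeasurableSet A) :
    μ (sphere 0 1 ∩ (fun u ↦ schneiderT p ((p : ℚ_[p]) ^ k * u⁻¹)) ⁻¹' A) =
      (p - 1 : ℕ) * μ (ball 0 1 ∩ A) := by
  have branch (b : ℕ) (hb : b ∈ Finset.Ico 1 p) :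
      μ (ball (b : ℚ_[p]) 1 ∩ (fun u ↦ schneiderT p ((p : ℚ_[p]) ^ k * u⁻¹)) ⁻¹' A) =
        μ (ball 0 1 ∩ A) := by
    rw [← measure_preimage_add_right μ (-b : ℚ_[p]) (ball 0 1 ∩ A)]
    congr 1
    ext u
    simp only [mem_inter_iff, mem_preimage, mem_ball_iff_norm, sub_zero, ← sub_eq_add_neg]
    refine and_congr_right fun hu ↦ ?_
    rw [schneiderT_zpow_mul_inv hb (mem_ball_iff_norm.2 hu)]
  have disj : (Finset.Ico 1 p : Set ℕ).PairwiseDisjoint fun b ↦ ball (b : ℚ_[p]) 1 :=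
    pairwiseDisjoint_ball_natCast.subset fun b hb ↦ by simp_all
  have hf : Measurable fun u ↦ schneiderT p ((p : ℚ_[p]) ^ k * u⁻¹) :=
    measurable_schneiderT.comp (measurable_inv.const_mul _)
  rw [sphere_eq_biUnion_ball, iUnion₂_inter, measure_biUnion_finset
    (disj.mono fun b ↦ inter_subset_left) fun b _ ↦ measurableSet_ball.inter (hf hA),
    Finset.sum_congr rfl branch, Finset.sum_const, Nat.card_Ico, nsmul_eq_mul]

lemma measure_sphere_zpow_inter_preimage_schneiderT (k : ℤ) {A : Set ℚ_[p]}
    (hA : MeasurableSet A) :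
    μ (sphere 0 ((p : ℝ) ^ (-k)) ∩ schneiderT p ⁻¹' A) =
      ‖(p : ℚ_[p]) ^ k‖ₑ * ((p - 1 : ℕ) * μ (ball 0 1 ∩ A)) := by
  have hpk : (p : ℚ_[p]) ^ k ≠ 0 := zpow_ne_zero k (Nat.cast_ne_zero.2 hp.out.ne_zero)
  have hf : Measurable fun u ↦ schneiderT p ((p : ℚ_[p]) ^ k * u) :=
    measurable_schneiderT.comp (measurable_const_mul _)
  have smul_eq : sphere 0 ((p : ℝ) ^ (-k)) ∩ schneiderT p ⁻¹' A =
      (p : ℚ_[p]) ^ k • (sphere 0 1 ∩ (fun u ↦ schneiderT p ((p : ℚ_[p]) ^ k * u)) ⁻¹' A) := by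
    rw [smul_set_inter₀ hpk, smul_sphere' hpk, smul_zero, Padic.norm_p_zpow, mul_one]
    ext x
    rw [mem_inter_iff, mem_inter_iff, mem_smul_set_iff_inv_smul_mem₀ hpk, mem_preimage,
      mem_preimage, smul_eq_mul, mul_inv_cancel_left₀ hpk]
  rw [smul_eq, addHaar_padic_smul μ hpk, ← measure_sphere_inter_preimage_schneiderT_inv μ k hA,
    inter_comm, ← Measure.restrict_apply (hf hA),
    ← measurePreserving_inv_restrict_sphere.measure_preimage (hf hA).nullMeasurableSet,
    Measure.restrict_apply (measurable_inv (hf hA)), inter_comm]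
  rfl

end Schneider

section DigitLaw

variable (p : ℕ)

/-- The success probability `1 - 1 / p` of the geometric law that governs the digits. -/
noncomputable def digitParameter : unitInterval :=
  unitInterval.symm ⟨(p : ℝ)⁻¹, inv_nonneg.2 p.cast_nonneg, Nat.cast_inv_le_one p⟩

/-- The law of the first digit of Schneider's continued fraction, which gives mass
`(p - 1) * p ^ (-k)` to `{k}` for `1 ≤ k`. -/
noncomputable def digitLaw : Measure ℤ :=
  (geometricMeasure (digitParameter p)).map fun n : ℕ ↦ (n : ℤ) + 1

instance : IsProbabilityMeasure (digitLaw p) :=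
  Measure.isProbabilityMeasure_map (measurable_of_countable _).aemeasurable

lemma digitParameter_ne_zero [hp : Fact p.Prime] : digitParameter p ≠ 0 := by
  refine fun h ↦ hp.out.one_lt.ne' ?_
  rw [digitParameter, unitInterval.symm_eq_zero] at h
  exact_mod_cast inv_eq_one.1 (congrArg Subtype.val h)

variable {p}

lemma digitLaw_singleton_of_lt_one {k : ℤ} (hk : k < 1) : digitLaw p {k} = 0 := by
  have preimage_eq : (fun n : ℕ ↦ (n : ℤ) + 1) ⁻¹' {k} = ∅ := by
    ext n
    simp only [mem_preimage, mem_singleton_iff, mem_empty_iff_false]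
    lia
  rw [digitLaw, Measure.map_apply (measurable_of_countable _) (measurableSet_singleton k),
    preimage_eq, measure_empty]

variable [hp : Fact p.Prime]

lemma digitParameter_mass_eq (n : ℕ) : (1 - digitParameter p : ℝ) ^ n * digitParameter p =
    ((p : ℝ) - 1) * (p : ℝ) ^ (-((n : ℝ) + 1)) := by
  have hp0 : (0 : ℝ) < p := Nat.cast_pos.2 hp.out.pos
  rw [Real.rpow_neg hp0.le, Real.rpow_add_one hp0.ne', Real.rpow_natCast, digitParameter,
    unitInterval.coe_symm_eq, sub_sub_cancel, inv_pow]
  field_simp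

lemma digitLaw_singleton_of_one_le {k : ℤ} (hk : 1 ≤ k) :
    digitLaw p {k} = ‖(p : ℚ_[p]) ^ k‖ₑ * (p - 1 : ℕ) := by
  obtain ⟨n, rfl⟩ : ∃ n : ℕ, k = n + 1 := ⟨(k - 1).toNat, by lia⟩
  have preimage_eq : (fun n : ℕ ↦ (n : ℤ) + 1) ⁻¹' {(n : ℤ) + 1} = {n} := by
    ext m
    simp
  rw [digitLaw, Measure.map_apply (measurable_of_countable _) (measurableSet_singleton _),
    preimage_eq, geometricMeasure_singleton (digitParameter_ne_zero p), ← ofReal_norm,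
    Padic.norm_p_zpow, ← ENNReal.ofReal_natCast, ← ENNReal.ofReal_mul (by positivity),
    Nat.cast_sub hp.out.one_le, Nat.cast_one, digitParameter_mass_eq, mul_comm,
    ← Real.rpow_intCast]
  push_cast
  rfl

lemma integrable_digitLaw_iff {f : ℤ → ℝ} : Integrable f (digitLaw p) ↔
    Summable fun n : ℕ ↦ f (n + 1) * (p : ℝ) ^ (-((n : ℝ) + 1)) := by
  have hp1 : (p : ℝ) - 1 ≠ 0 := sub_ne_zero.2 (mod_cast hp.out.one_lt.ne')
  calc Integrable f (digitLaw p)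
    _ ↔ Summable fun n : ℕ ↦ (1 - digitParameter p : ℝ) ^ n * digitParameter p * ‖f (n + 1)‖ := by
      rw [digitLaw, integrable_map_measure (measurable_of_countable _).aestronglyMeasurable
        (measurable_of_countable _).aemeasurable,
        integrable_geometricMeasure_iff (digitParameter_ne_zero p)]
      rfl
    _ ↔ Summable fun n : ℕ ↦ ((p : ℝ) - 1) * |f (n + 1) * (p : ℝ) ^ (-((n : ℝ) + 1))| := by
      refine summable_congr fun n ↦ ?_
      rw [digitParameter_mass_eq, abs_mul, abs_of_nonneg (Real.rpow_nonneg p.cast_nonneg _),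
        Real.norm_eq_abs, mul_assoc, mul_comm |_|]
    _ ↔ Summable fun n : ℕ ↦ f (n + 1) * (p : ℝ) ^ (-((n : ℝ) + 1)) := by
      rw [summable_mul_left_iff hp1, summable_abs_iff]

lemma integral_digitLaw {f : ℤ → ℝ} (hf : Integrable f (digitLaw p)) :
    ∫ k, f k ∂digitLaw p = ((p : ℝ) - 1) * ∑' n : ℕ, f (n + 1) * (p : ℝ) ^ (-((n : ℝ) + 1)) := by
  have hf_meas : AEStronglyMeasurable f (digitLaw p) :=
    (measurable_of_countable f).aestronglyMeasurable
  have succ_meas : Measurable fun n : ℕ ↦ (n : ℤ) + 1 := measurable_of_countable _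
  have hf_succ : Integrable (fun n : ℕ ↦ f (n + 1)) (geometricMeasure (digitParameter p)) :=
    hf.comp_measurable succ_meas
  rw [digitLaw, integral_map succ_meas.aemeasurable hf_meas,
    integral_geometricMeasure' (digitParameter_ne_zero p) hf_succ, ← tsum_mul_left]
  refine tsum_congr fun n ↦ ?_
  rw [digitParameter_mass_eq, smul_eq_mul, mul_assoc, mul_comm (f _)]

lemma ball_inter_padic_valuation_preimage_singleton {k : ℤ} (hk : 1 ≤ k) :
    ball 0 1 ∩ Padic.valuation ⁻¹' {k} = sphere (0 : ℚ_[p]) ((p : ℝ) ^ (-k)) := by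
  rw [padic_valuation_preimage_singleton (by lia), inter_eq_right]
  refine sphere_subset_closedBall.trans (closedBall_subset_ball ?_)
  rw [zpow_lt_one_iff_right₀ (mod_cast hp.out.one_lt)]
  lia

variable [MeasurableSpace ℚ_[p]] [BorelSpace ℚ_[p]] (μ : Measure ℚ_[p]) [μ.IsAddHaarMeasure]

lemma cond_ball_padic_valuation_inter_preimage_schneiderT (k : ℤ) {A : Set ℚ_[p]}
    (hA : MeasurableSet A) :
    μ[|ball 0 1] (Padic.valuation ⁻¹' {k} ∩ schneiderT p ⁻¹' A) =
      digitLaw p {k} * μ[|ball 0 1] A := by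
  rcases lt_or_ge k 1 with hk | hk
  · have subset_zero : ball 0 1 ∩ Padic.valuation ⁻¹' {k} ⊆ {(0 : ℚ_[p])} := fun x hx ↦ by
      by_contra hx0
      exact (one_le_padic_valuation hx0 (mem_ball_zero_iff.1 hx.1)).not_gt (hx.2 ▸ hk)
    rw [digitLaw_singleton_of_lt_one hk, zero_mul, cond_apply measurableSet_ball, ← inter_assoc,
      measure_mono_null (inter_subset_left.trans subset_zero) (measure_singleton 0), mul_zero]
  · rw [cond_apply measurableSet_ball, cond_apply measurableSet_ball, ← inter_assoc,
      ball_inter_padic_valuation_preimage_singleton hk,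
      measure_sphere_zpow_inter_preimage_schneiderT μ k hA, digitLaw_singleton_of_one_le hk]
    ring

instance : IsProbabilityMeasure μ[|ball 0 1] :=
  cond_isProbabilityMeasure_of_finite (measure_ball_pos μ 0 one_pos).ne' measure_ball_lt_top.ne

lemma map_padic_valuation_cond_ball : μ[|ball 0 1].map Padic.valuation = digitLaw p :=
  Measure.ext_of_singleton fun k ↦ by
    rw [Measure.map_apply measurable_padic_valuation (measurableSet_singleton k)]
    simpa using cond_ball_padic_valuation_inter_preimage_schneiderT μ k MeasurableSet.univ

lemma cond_ball_padic_valuation_inter_preimage_schneiderT_eq_mul (k : ℤ) (A : Set ℚ_[p])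
    (hA : MeasurableSet A) :
    μ[|ball 0 1] (Padic.valuation ⁻¹' {k} ∩ schneiderT p ⁻¹' A) =
      μ[|ball 0 1] (Padic.valuation ⁻¹' {k}) * μ[|ball 0 1] A := by
  rw [cond_ball_padic_valuation_inter_preimage_schneiderT μ k hA,
    ← map_padic_valuation_cond_ball μ,
    Measure.map_apply measurable_padic_valuation (measurableSet_singleton k)]

theorem measurePreserving_schneiderT :
    MeasurePreserving (schneiderT p) μ[|ball 0 1] μ[|ball 0 1] :=
  measurePreserving_of_measure_inter_eq_mul measurable_padic_valuation measurable_schneiderT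
    (cond_ball_padic_valuation_inter_preimage_schneiderT_eq_mul μ)

theorem indepFun_padic_valuation_schneiderT :
    Padic.valuation ⟂ᵢ[μ[|ball 0 1]] schneiderT p :=
  indepFun_of_measure_inter_eq_mul (measurePreserving_schneiderT μ) measurable_padic_valuation
    (cond_ball_padic_valuation_inter_preimage_schneiderT_eq_mul μ)

theorem ae_forall_tendsto_average_schneider_digits {F : ℤ → ℝ} (hF : Integrable F (digitLaw p)) :
    ∀ᵐ x ∂μ[|ball 0 1], ∀ f : ℤ → ℝ, (∀ k, |f k| ≤ F k) →
      Tendsto (fun n : ℕ ↦ (∑ i ∈ Finset.range n, f ((schneiderT p)^[i] x).valuation) / n) atTop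
        (𝓝 (((p : ℝ) - 1) * ∑' k : ℕ, f (k + 1) * (p : ℝ) ^ (-((k : ℝ) + 1)))) := by
  have hv := (measurable_padic_valuation (p := p)).aemeasurable (μ := μ[|ball 0 1])
  have f_meas (f : ℤ → ℝ) : AEStronglyMeasurable f (μ[|ball 0 1].map Padic.valuation) :=
    (measurable_of_countable f).aestronglyMeasurable
  have hF_comp : Integrable (fun x ↦ F x.valuation) μ[|ball 0 1] :=
    (integrable_map_measure (f_meas F) hv).1 (by rwa [map_padic_valuation_cond_ball])
  filter_upwards [ae_forall_tendsto_average_of_indepFun (measurePreserving_schneiderT μ)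
    measurable_padic_valuation (indepFun_padic_valuation_schneiderT μ) hF_comp] with x hx f hf
  have hf_int : Integrable f (digitLaw p) :=
    hF.mono' (measurable_of_countable f).aestronglyMeasurable (.of_forall hf)
  rw [← integral_digitLaw hf_int, ← map_padic_valuation_cond_ball μ, integral_map hv (f_meas f)]
  exact hx f hf

end DigitLaw

section PowerMoments

variable {p : ℕ} [hp : Fact p.Prime]

lemma abs_intCast_rpow_le (k : ℤ) (t : ℝ) : |(k : ℝ) ^ t| ≤ |(k : ℝ)| ^ ⌈t⌉₊ + 1 := by
  refine (Real.abs_rpow_le_abs_rpow _ _).trans ?_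
  rcases eq_or_ne k 0 with rfl | hk
  · rw [Int.cast_zero, abs_zero]
    exact (Real.zero_rpow_le_one t).trans (le_add_of_nonneg_left (by positivity))
  · have one_le_abs : 1 ≤ |(k : ℝ)| := mod_cast Int.one_le_abs hk
    calc |(k : ℝ)| ^ t ≤ |(k : ℝ)| ^ (⌈t⌉₊ : ℝ) :=
          Real.rpow_le_rpow_of_exponent_le one_le_abs (Nat.le_ceil t)
      _ = |(k : ℝ)| ^ ⌈t⌉₊ := Real.rpow_natCast _ _
      _ ≤ |(k : ℝ)| ^ ⌈t⌉₊ + 1 := le_add_of_nonneg_right zero_le_one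

lemma integrable_abs_pow_digitLaw (m : ℕ) :
    Integrable (fun k : ℤ ↦ |(k : ℝ)| ^ m) (digitLaw p) := by
  have hp0 : (0 : ℝ) < p := Nat.cast_pos.2 hp.out.pos
  have norm_inv_lt_one : ‖(p : ℝ)⁻¹‖ < 1 := by
    rw [norm_inv, Real.norm_of_nonneg hp0.le]
    exact inv_lt_one_of_one_lt₀ (mod_cast hp.out.one_lt)
  have summable_shift : Summable fun n : ℕ ↦ ((n + 1 : ℕ) : ℝ) ^ m * (p : ℝ)⁻¹ ^ (n + 1) :=
    (summable_pow_mul_geometric_of_norm_lt_one m norm_inv_lt_one).comp_injective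
      (add_left_injective 1)
  refine integrable_digitLaw_iff.2 (summable_shift.congr fun n ↦ ?_)
  rw [← Nat.cast_add_one, ← Nat.cast_add_one, Real.rpow_neg hp0.le, Real.rpow_natCast, inv_pow,
    Int.cast_natCast, Nat.abs_cast]

lemma integrable_rpow_digitLaw (t : ℝ) : Integrable (fun k : ℤ ↦ (k : ℝ) ^ t) (digitLaw p) :=
  ((integrable_abs_pow_digitLaw ⌈t⌉₊).add (integrable_const 1)).mono'
    (measurable_of_countable _).aestronglyMeasurable (.of_forall fun k ↦ abs_intCast_rpow_le k t)

lemma summable_rpow_mul_rpow_neg (t : ℝ) :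
    Summable fun k : ℕ ↦ ((k : ℝ) + 1) ^ t * (p : ℝ) ^ (-((k : ℝ) + 1)) := by
  simpa using integrable_digitLaw_iff.1 (integrable_rpow_digitLaw (p := p) t)

variable [MeasurableSpace ℚ_[p]] [BorelSpace ℚ_[p]] (μ : Measure ℚ_[p]) [μ.IsAddHaarMeasure]

theorem ae_forall_tendsto_average_rpow_schneider_digits :
    ∀ᵐ x ∂μ[|ball 0 1], ∀ t : ℝ,
      Tendsto (fun n : ℕ ↦
          (∑ i ∈ Finset.range n, (((schneiderT p)^[i] x).valuation : ℝ) ^ t) / n) atTop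
        (𝓝 (((p : ℝ) - 1) * ∑' k : ℕ, ((k : ℝ) + 1) ^ t * (p : ℝ) ^ (-((k : ℝ) + 1)))) := by
  have ae_dominated (m : ℕ) := ae_forall_tendsto_average_schneider_digits μ
    ((integrable_abs_pow_digitLaw m).add (integrable_const 1))
  filter_upwards [ae_all_iff.2 ae_dominated] with x hx t
  simpa using hx ⌈t⌉₊ (fun k ↦ (k : ℝ) ^ t) fun k ↦ abs_intCast_rpow_le k t

end PowerMoments

theorem stmt_14_general (p : ℕ) [Fact p.Prime] [MeasurableSpace ℚ_[p]] [BorelSpace ℚ_[p]]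
    (μ : Measure ℚ_[p]) [μ.IsAddHaarMeasure] :
    (∀ t : ℝ, Summable fun k : ℕ ↦ ((k : ℝ) + 1) ^ (-t) * (p : ℝ) ^ (-((k : ℝ) + 1))) ∧
    ∀ᵐ x ∂μ, ‖x‖ < 1 → ∀ t : ℝ,
      Tendsto (fun n : ℕ ↦
          (∑ i ∈ Finset.range n, (((schneiderT p)^[i] x).valuation : ℝ) ^ (-t)) / n) atTop
        (𝓝 (((p : ℝ) - 1) * ∑' k : ℕ, ((k : ℝ) + 1) ^ (-t) * (p : ℝ) ^ (-((k : ℝ) + 1)))) := by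
  refine ⟨fun t ↦ summable_rpow_mul_rpow_neg (-t), ?_⟩
  have ae_ball := ae_forall_tendsto_average_rpow_schneider_digits (p := p) μ
  rw [ProbabilityTheory.cond,
    Measure.ae_ennreal_smul_measure_iff (ENNReal.inv_ne_zero.2 measure_ball_lt_top.ne),
    ae_restrict_iff' measurableSet_ball] at ae_ball
  exact ae_ball.mono fun x hx hx1 t ↦ hx (mem_ball_zero_iff.2 hx1) (-t)

/-- For `μ_p`-a.e. `x ∈ pℤ_p` and every `t > 0`, the Birkhoff averages
`(a_1(x)^{-t} + ⋯ + a_n(x)^{-t})/n` converge to `(p-1) ∑_{k ≥ 1} k^{-t} p^{-k}`,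
which is a finite (convergent) sum.  Here `a_{i+1}(x) = v_p(T_p^i x)`. -/
theorem stmt_14 (p : ℕ) [hp : Fact p.Prime]
    [MeasurableSpace ℚ_[p]] [BorelSpace ℚ_[p]]
    (μ : MeasureTheory.Measure ℚ_[p]) [μ.IsAddHaarMeasure]
    (hμ : μ {x : ℚ_[p] | ‖x‖ < 1} = 1) :
    (∀ t : ℝ, 0 < t →
      Summable (fun k : ℕ => ((k : ℝ) + 1) ^ (-t) * (p : ℝ) ^ (-((k : ℝ) + 1)))) ∧
    ∀ᵐ x ∂μ, ‖x‖ < 1 → ∀ t : ℝ, 0 < t →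
      Filter.Tendsto
        (fun n : ℕ =>
          (∑ i ∈ Finset.range n, ((((schneiderT p)^[i] x).valuation : ℝ)) ^ (-t)) / (n : ℝ))
        Filter.atTop
        (nhds (((p : ℝ) - 1) * ∑' k : ℕ, ((k : ℝ) + 1) ^ (-t) * (p : ℝ) ^ (-((k : ℝ) + 1)))) := by
  exact ⟨fun t _ ↦ (stmt_14_general p μ).1 t,
    (stmt_14_general p μ).2.mono fun x hx hx1 t _ ↦ hx hx1 t⟩
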